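/- arXiv:1207.4511 — 2 statements merged into one kernel-verified Lean document; each statement's English description precedes it below -/
import Mathlib

section
/- A Banach algebra A is approximately amenable if and only if it is weak* approximately amenable. -/
open Filter Topology TensorProduct

noncomputable section


open Filter Topology TensorProduct


/-! Banach bimodules and derivations -/

variable (A : Type) [NonUnitalNormedRing A] [NormedSpace ℂ A]
  [IsScalarTower ℂ A A] [SMulCommClass ℂ A A]

/-- A Banach `A`-bimodule structure on a Banach space `X`: `l a` is the left action of `a`,
`r a` is the right action of `a`. -/
structure BanachBimod (X : Type) [NormedAddCommGroup X] [NormedSpace ℂ X] where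
  l : A → X →L[ℂ] X
  r : A → X →L[ℂ] X
  l_add : ∀ a b, l (a + b) = l a + l b
  l_smul : ∀ (c : ℂ) a, l (c • a) = c • l a
  r_add : ∀ a b, r (a + b) = r a + r b
  r_smul : ∀ (c : ℂ) a, r (c • a) = c • r a
  l_bound : ∃ C : ℝ, ∀ a, ‖l a‖ ≤ C * ‖a‖
  r_bound : ∃ C : ℝ, ∀ a, ‖r a‖ ≤ C * ‖a‖
  l_mul : ∀ a b, l (a * b) = (l a).comp (l b)
  r_mul : ∀ a b, r (a * b) = (r b).comp (r a)
  lr_comm : ∀ a b, (l a).comp (r b) = (r b).comp (l a)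

variable {A}

namespace BanachBimod

variable {X : Type} [NormedAddCommGroup X] [NormedSpace ℂ X]

/-- The dual bimodule structure on `X →L[ℂ] ℂ`. -/
def dual (M : BanachBimod A X) : BanachBimod A (X →L[ℂ] ℂ) where
  l a := (ContinuousLinearMap.compL ℂ X X ℂ).flip (M.r a)
  r a := (ContinuousLinearMap.compL ℂ X X ℂ).flip (M.l a)
  l_add a b := by simp only [M.r_add, map_add]
  l_smul c a := by simp only [M.r_smul, map_smul]
  r_add a b := by simp only [M.l_add, map_add]
  r_smul c a := by simp only [M.l_smul, map_smul]
  l_bound := by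
    obtain ⟨C, hC⟩ := M.r_bound
    refine ⟨‖(ContinuousLinearMap.compL ℂ X X ℂ).flip‖ * C, fun a => ?_⟩
    calc ‖(ContinuousLinearMap.compL ℂ X X ℂ).flip (M.r a)‖
        ≤ ‖(ContinuousLinearMap.compL ℂ X X ℂ).flip‖ * ‖M.r a‖ :=
          (ContinuousLinearMap.compL ℂ X X ℂ).flip.le_opNorm _
      _ ≤ ‖(ContinuousLinearMap.compL ℂ X X ℂ).flip‖ * (C * ‖a‖) := by
          exact mul_le_mul_of_nonneg_left (hC a) (norm_nonneg _)
      _ = ‖(ContinuousLinearMap.compL ℂ X X ℂ).flip‖ * C * ‖a‖ := by ring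
  r_bound := by
    obtain ⟨C, hC⟩ := M.l_bound
    refine ⟨‖(ContinuousLinearMap.compL ℂ X X ℂ).flip‖ * C, fun a => ?_⟩
    calc ‖(ContinuousLinearMap.compL ℂ X X ℂ).flip (M.l a)‖
        ≤ ‖(ContinuousLinearMap.compL ℂ X X ℂ).flip‖ * ‖M.l a‖ :=
          (ContinuousLinearMap.compL ℂ X X ℂ).flip.le_opNorm _
      _ ≤ ‖(ContinuousLinearMap.compL ℂ X X ℂ).flip‖ * (C * ‖a‖) := by
          exact mul_le_mul_of_nonneg_left (hC a) (norm_nonneg _)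
      _ = ‖(ContinuousLinearMap.compL ℂ X X ℂ).flip‖ * C * ‖a‖ := by ring
  l_mul a b := by
    ext φ x
    simp [M.r_mul]
  r_mul a b := by
    ext φ x
    simp [M.l_mul]
  lr_comm a b := by
    ext φ x
    simpa using congrArg φ (congrFun (congrArg DFunLike.coe (M.lr_comm b a)) x)

/-- A continuous derivation from `A` into the bimodule `X`. -/
def IsDerivation (M : BanachBimod A X) (D : A →L[ℂ] X) : Prop :=
  ∀ a b, D (a * b) = M.l a (D b) + M.r b (D a)

/-- `D` is inner. -/
def Inner (M : BanachBimod A X) (D : A →L[ℂ] X) : Prop :=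
  ∃ x : X, ∀ a, D a = M.l a x - M.r a x

/-- `D` is approximately inner: some net of inner derivations converges to `D` pointwise
in norm. -/
def ApproxInner (M : BanachBimod A X) (D : A →L[ℂ] X) : Prop :=
  ∃ (ι : Type) (φ : Filter ι) (x : ι → X), φ.NeBot ∧
    ∀ a, Tendsto (fun i => M.l a (x i) - M.r a (x i)) φ (𝓝 (D a))

/-- `D` is sequentially approximately inner. -/
def SeqApproxInner (M : BanachBimod A X) (D : A →L[ℂ] X) : Prop :=
  ∃ x : ℕ → X, ∀ a, Tendsto (fun n => M.l a (x n) - M.r a (x n)) atTop (𝓝 (D a))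

/-- `D` is boundedly approximately inner: the approximating net of inner derivations is
bounded as a net of operators from `A` to `X`. -/
def BddApproxInner (M : BanachBimod A X) (D : A →L[ℂ] X) : Prop :=
  ∃ (ι : Type) (φ : Filter ι) (x : ι → X), φ.NeBot ∧
    (∃ C : ℝ, ∀ i a, ‖M.l a (x i) - M.r a (x i)‖ ≤ C * ‖a‖) ∧
    ∀ a, Tendsto (fun i => M.l a (x i) - M.r a (x i)) φ (𝓝 (D a))

/-- `D` is uniformly approximately inner: inner derivations approximate `D` uniformly
on the unit ball of `A`, i.e. in operator norm. -/
def UnifApproxInner (M : BanachBimod A X) (D : A →L[ℂ] X) : Prop :=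
  ∃ (ι : Type) (φ : Filter ι) (x : ι → X), φ.NeBot ∧
    ∀ ε > (0 : ℝ), ∀ᶠ i in φ, ∀ a, ‖D a - (M.l a (x i) - M.r a (x i))‖ ≤ ε * ‖a‖

/-- A derivation into the dual module `X →L[ℂ] ℂ` is weak* approximately inner. -/
def WeakStarApproxInner (M : BanachBimod A X) (D : A →L[ℂ] (X →L[ℂ] ℂ)) : Prop :=
  ∃ (ι : Type) (φ : Filter ι) (x : ι → (X →L[ℂ] ℂ)), φ.NeBot ∧
    ∀ (a : A) (ξ : X),
      Tendsto (fun i => (M.dual.l a (x i) - M.dual.r a (x i)) ξ) φ (𝓝 (D a ξ))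

end BanachBimod

variable (A)

/-- `A` is contractible: every continuous derivation into every Banach `A`-bimodule is inner. -/
def Contractible : Prop :=
  ∀ (X : Type) (_ : NormedAddCommGroup X) (_ : NormedSpace ℂ X) (M : BanachBimod A X)
    (D : A →L[ℂ] X), M.IsDerivation D → M.Inner D

def ApproximatelyContractible : Prop :=
  ∀ (X : Type) (_ : NormedAddCommGroup X) (_ : NormedSpace ℂ X) (M : BanachBimod A X)
    (D : A →L[ℂ] X), M.IsDerivation D → M.ApproxInner D

def SeqApproximatelyContractible : Prop :=
  ∀ (X : Type) (_ : NormedAddCommGroup X) (_ : NormedSpace ℂ X) (M : BanachBimod A X)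
    (D : A →L[ℂ] X), M.IsDerivation D → M.SeqApproxInner D

def UnifApproximatelyContractible : Prop :=
  ∀ (X : Type) (_ : NormedAddCommGroup X) (_ : NormedSpace ℂ X) (M : BanachBimod A X)
    (D : A →L[ℂ] X), M.IsDerivation D → M.UnifApproxInner D

def ApproximatelyAmenable : Prop :=
  ∀ (X : Type) (_ : NormedAddCommGroup X) (_ : NormedSpace ℂ X) (M : BanachBimod A X)
    (D : A →L[ℂ] (X →L[ℂ] ℂ)), M.dual.IsDerivation D → M.dual.ApproxInner D

def SeqApproximatelyAmenable : Prop :=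
  ∀ (X : Type) (_ : NormedAddCommGroup X) (_ : NormedSpace ℂ X) (M : BanachBimod A X)
    (D : A →L[ℂ] (X →L[ℂ] ℂ)), M.dual.IsDerivation D → M.dual.SeqApproxInner D

def BddApproximatelyAmenable : Prop :=
  ∀ (X : Type) (_ : NormedAddCommGroup X) (_ : NormedSpace ℂ X) (M : BanachBimod A X)
    (D : A →L[ℂ] (X →L[ℂ] ℂ)), M.dual.IsDerivation D → M.dual.BddApproxInner D

def WeakStarApproximatelyAmenable : Prop :=
  ∀ (X : Type) (_ : NormedAddCommGroup X) (_ : NormedSpace ℂ X) (M : BanachBimod A X)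
    (D : A →L[ℂ] (X →L[ℂ] ℂ)), M.dual.IsDerivation D → M.WeakStarApproxInner D


/-- The projective tensor "seminorm" on the algebraic tensor product `V ⊗[ℂ] W`, relative to
given (semi)norm functions on the factors: the infimum of `∑ να aₙ * νβ bₙ` over all
representations `t = ∑ aₙ ⊗ bₙ`. -/
def projTensorSN {V W : Type} [AddCommGroup V] [Module ℂ V] [AddCommGroup W] [Module ℂ W]
    (να : V → ℝ) (νβ : W → ℝ) (t : V ⊗[ℂ] W) : ℝ :=
  sInf {r : ℝ | ∃ L : List (V × W), t = (L.map fun p => p.1 ⊗ₜ[ℂ] p.2).sum ∧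
      r = (L.map fun p => να p.1 * νβ p.2).sum}

section SN

variable (C : Type) [NonUnitalRing C] [Module ℂ C] [IsScalarTower ℂ C C] [SMulCommClass ℂ C C]

/-- The left action `u ↦ a·u` of `C` on `C ⊗[ℂ] C`. -/
def tactL (a : C) : C ⊗[ℂ] C →ₗ[ℂ] C ⊗[ℂ] C :=
  TensorProduct.map (LinearMap.mulLeft ℂ a) LinearMap.id

/-- The right action `u ↦ u·a` of `C` on `C ⊗[ℂ] C`. -/
def tactR (a : C) : C ⊗[ℂ] C →ₗ[ℂ] C ⊗[ℂ] C :=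
  TensorProduct.map LinearMap.id (LinearMap.mulRight ℂ a)

/-- The multiplication map `π : C ⊗ C → C`. -/
def tpi : C ⊗[ℂ] C →ₗ[ℂ] C := LinearMap.mul' ℂ C

variable (ν : C → ℝ)

/-- Pseudo-amenability of the algebra `C` relative to the (semi)norm function `ν`:
there is an approximate diagonal, i.e. a net `(u_i) ⊂ C ⊗̂ C` with
`a·u_i − u_i·a → 0` (in the projective tensor seminorm) and `π(u_i)a → a` for all `a ∈ C`. -/
def PseudoAmenableSN : Prop :=
  ∃ (ι : Type) (φ : Filter ι) (u : ι → C ⊗[ℂ] C), φ.NeBot ∧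
    (∀ a : C, Tendsto (fun i => projTensorSN ν ν (tactL C a (u i) - tactR C a (u i))) φ (𝓝 0)) ∧
    (∀ a : C, Tendsto (fun i => ν (tpi C (u i) * a - a)) φ (𝓝 0))

/-- Sequential pseudo-amenability. -/
def SeqPseudoAmenableSN : Prop :=
  ∃ u : ℕ → C ⊗[ℂ] C,
    (∀ a : C, Tendsto (fun n => projTensorSN ν ν (tactL C a (u n) - tactR C a (u n))) atTop (𝓝 0)) ∧
    (∀ a : C, Tendsto (fun n => ν (tpi C (u n) * a - a)) atTop (𝓝 0))

/-- Pseudo-contractibility: there is a central approximate diagonal. -/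
def PseudoContractibleSN : Prop :=
  ∃ (ι : Type) (φ : Filter ι) (u : ι → C ⊗[ℂ] C), φ.NeBot ∧
    (∀ (a : C) i, tactL C a (u i) = tactR C a (u i)) ∧
    (∀ a : C, Tendsto (fun i => ν (tpi C (u i) * a - a)) φ (𝓝 0))

/-- Bounded pseudo-contractibility: a central approximate diagonal `(u_i)` such that
`(π(u_i))` is a multiplier-bounded approximate identity. -/
def BddPseudoContractibleSN : Prop :=
  ∃ (ι : Type) (φ : Filter ι) (u : ι → C ⊗[ℂ] C), φ.NeBot ∧
    (∀ (a : C) i, tactL C a (u i) = tactR C a (u i)) ∧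
    (∀ a : C, Tendsto (fun i => ν (tpi C (u i) * a - a)) φ (𝓝 0)) ∧
    (∃ K : ℝ, 0 < K ∧ ∀ i (a : C), ν (tpi C (u i) * a) ≤ K * ν a)

end SN

section Normed

variable (A : Type) [NonUnitalNormedRing A] [NormedSpace ℂ A]
  [IsScalarTower ℂ A A] [SMulCommClass ℂ A A]

def PseudoAmenable : Prop := PseudoAmenableSN A (fun a => ‖a‖)
def SeqPseudoAmenable : Prop := SeqPseudoAmenableSN A (fun a => ‖a‖)
def PseudoContractible : Prop := PseudoContractibleSN A (fun a => ‖a‖)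
def BddPseudoContractible : Prop := BddPseudoContractibleSN A (fun a => ‖a‖)

/-- `A` has a (two-sided) approximate identity. -/
def HasApproxIdentity : Prop :=
  ∃ (ι : Type) (φ : Filter ι) (e : ι → A), φ.NeBot ∧
    ∀ a : A, Tendsto (fun i => e i * a) φ (𝓝 a) ∧ Tendsto (fun i => a * e i) φ (𝓝 a)

/-- `A` has a bounded (two-sided) approximate identity. -/
def HasBoundedApproxIdentity : Prop :=
  ∃ (ι : Type) (φ : Filter ι) (e : ι → A), φ.NeBot ∧ (∃ C : ℝ, ∀ i, ‖e i‖ ≤ C) ∧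
    ∀ a : A, Tendsto (fun i => e i * a) φ (𝓝 a) ∧ Tendsto (fun i => a * e i) φ (𝓝 a)

/-- `A` has a left approximate identity. -/
def HasLeftApproxIdentity : Prop :=
  ∃ (ι : Type) (φ : Filter ι) (e : ι → A), φ.NeBot ∧
    ∀ a : A, Tendsto (fun i => e i * a) φ (𝓝 a)

/-- `A` has a right approximate identity. -/
def HasRightApproxIdentity : Prop :=
  ∃ (ι : Type) (φ : Filter ι) (e : ι → A), φ.NeBot ∧
    ∀ a : A, Tendsto (fun i => a * e i) φ (𝓝 a)

/-- `A` has a central approximate identity. -/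
def HasCentralApproxIdentity : Prop :=
  ∃ (ι : Type) (φ : Filter ι) (e : ι → A), φ.NeBot ∧
    (∀ (a : A) i, a * e i = e i * a) ∧
    ∀ a : A, Tendsto (fun i => e i * a) φ (𝓝 a)

/-- `A` is approximately biprojective: there is a net `(T_α)` of bounded `A`-bimodule morphisms
`A → A ⊗̂ A` with `π ∘ T_α (a) → a` for every `a`. -/
def ApproxBiprojective : Prop :=
  ∃ (ι : Type) (φ : Filter ι) (T : ι → (A →ₗ[ℂ] A ⊗[ℂ] A)), φ.NeBot ∧
    (∀ i, ∃ C : ℝ, ∀ a, projTensorSN (fun x : A => ‖x‖) (fun x : A => ‖x‖) (T i a) ≤ C * ‖a‖) ∧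
    (∀ i (a b : A), T i (a * b) = tactL A a (T i b) ∧ T i (a * b) = tactR A b (T i a)) ∧
    (∀ a : A, Tendsto (fun i => tpi A (T i a)) φ (𝓝 a))

end Normed


end

/-!
Only the reverse implication needs an argument, and it gives more: the inner derivations
approximate every continuous derivation `D : A → X`, dual module or not. Indeed, weak* approximate
amenability yields a net in the bidual `X**` whose inner derivations converge weak* to `D`, viewed
as a derivation into `X**`. If `D` were outside the closure of the inner derivations in the product
space `A → X`, Hahn–Banach would give a functional that kills the inner derivations but not `D`.
Such a functional involves only finitely many coordinates, so it can be evaluated along the net;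
it vanishes at every term, but its limit is its value at `D`.
-/

section Functionals

variable {𝕜 ι : Type*}

theorem exists_finset_forall_eq_sum_apply_single [Field 𝕜] [TopologicalSpace 𝕜] [T1Space 𝕜]
    [DecidableEq ι] {E : ι → Type*} [∀ i, AddCommGroup (E i)] [∀ i, Module 𝕜 (E i)]
    [∀ i, TopologicalSpace (E i)] (f : StrongDual 𝕜 (∀ i, E i)) :
    ∃ s : Finset ι, ∀ v, f v = ∑ i ∈ s, f (Pi.single i (v i)) := by
  have hf : f ⁻¹' {1}ᶜ ∈ 𝓝 0 :=
    f.continuous.continuousAt.preimage_mem_nhds (isOpen_compl_singleton.mem_nhds (by simp))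
  rw [nhds_pi, Filter.mem_pi'] at hf
  obtain ⟨s, t, ht, hst⟩ := hf
  -- A linear functional that omits the value `1` on a subspace vanishes there.
  have eq_zero_of_vanish (v : ∀ i, E i) (hv : ∀ i ∈ s, v i = 0) : f v = 0 := by
    by_contra hfv
    have hmem : (f v)⁻¹ • v ∈ Set.pi s t := fun i hi => by
      simpa [hv i hi] using mem_of_mem_nhds (ht i)
    exact hst hmem (by simp [hfv])
  refine ⟨s, fun v => ?_⟩
  have hv := eq_zero_of_vanish (v - ∑ i ∈ s, Pi.single i (v i)) fun i hi => by
    simp [Finset.sum_apply, Finset.sum_pi_single, hi]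
  rwa [map_sub, map_sum, sub_eq_zero] at hv

theorem tendsto_apply_comp_pi [Field 𝕜] [TopologicalSpace 𝕜] [IsTopologicalRing 𝕜] [T1Space 𝕜]
    {X κ : Type*} [AddCommGroup X] [Module 𝕜 X] [TopologicalSpace X] {φ : Filter κ}
    {Y : ι → Type*} [∀ i, AddCommGroup (Y i)] [∀ i, Module 𝕜 (Y i)] [∀ i, TopologicalSpace (Y i)]
    {T : ∀ i, X →L[𝕜] Y i} {y : ∀ i, Y i}
    {F : κ → Module.Dual 𝕜 (StrongDual 𝕜 X)}
    (hF : ∀ i (g : StrongDual 𝕜 (Y i)), Tendsto (fun k => F k (g.comp (T i))) φ (𝓝 (g (y i))))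
    (f : StrongDual 𝕜 (∀ i, Y i)) :
    Tendsto (fun k => F k (f.comp (.pi T))) φ (𝓝 (f y)) := by
  classical
  obtain ⟨s, hs⟩ := exists_finset_forall_eq_sum_apply_single f
  let g (i : ι) : StrongDual 𝕜 (Y i) := f.comp (.single 𝕜 Y i)
  have hfT : f.comp (.pi T) = ∑ i ∈ s, (g i).comp (T i) := by
    ext x
    simp [hs (fun i => T i x), g]
  simp only [hfT, map_sum, hs y]
  exact tendsto_finsetSum s fun i _ => hF i (g i)

variable [RCLike 𝕜]

theorem eq_zero_on_submodule_of_forall_re_lt {E : Type*} [AddCommGroup E] [Module 𝕜 E]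
    {S : Submodule 𝕜 E} {f : Module.Dual 𝕜 E} {u : ℝ} (h : ∀ w ∈ S, RCLike.re (f w) < u)
    {w : E} (hw : w ∈ S) : f w = 0 := by
  by_contra hfw
  simpa [hfw] using h (((u : 𝕜) / f w) • w) (S.smul_mem _ hw)

variable {E : Type*} [AddCommGroup E] [Module 𝕜 E] [TopologicalSpace E] [Module ℝ E]
  [IsScalarTower ℝ 𝕜 E] [IsTopologicalAddGroup E] [ContinuousSMul 𝕜 E] [LocallyConvexSpace ℝ E]

theorem mem_topologicalClosure_of_forall_dual_eq_zero {S : Submodule 𝕜 E} {v : E}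
    (h : ∀ f : StrongDual 𝕜 E, (∀ w ∈ S, f w = 0) → f v = 0) : v ∈ S.topologicalClosure := by
  by_contra hv
  obtain ⟨f, u, hfu, huv⟩ := RCLike.geometric_hahn_banach_closed_point (𝕜 := 𝕜)
    (S.topologicalClosure.restrictScalars ℝ).convex S.isClosed_topologicalClosure hv
  have hfS : ∀ w ∈ S, f w = 0 := fun w hw =>
    eq_zero_on_submodule_of_forall_re_lt (f := f.toLinearMap) hfu (S.le_topologicalClosure hw)
  have hu : 0 < u := by simpa using hfu 0 (zero_mem _)
  simp [h f hfS, hu.not_gt] at huv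

theorem mem_closure_range_of_tendsto_apply_comp {X κ : Type*} [AddCommGroup X] [Module 𝕜 X]
    [TopologicalSpace X] {φ : Filter κ} [φ.NeBot] (T : X →L[𝕜] E) {y : E}
    {F : κ → Module.Dual 𝕜 (StrongDual 𝕜 X)}
    (hF : ∀ f : StrongDual 𝕜 E, Tendsto (fun k => F k (f.comp T)) φ (𝓝 (f y))) :
    y ∈ closure (Set.range T) := by
  refine mem_topologicalClosure_of_forall_dual_eq_zero (S := T.range) fun f hf => ?_
  have hfT : f.comp T = 0 := ContinuousLinearMap.ext fun x => hf (T x) ⟨x, rfl⟩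
  have hlim := hF f
  simp only [hfT, map_zero] at hlim
  exact tendsto_nhds_unique hlim tendsto_const_nhds

end Functionals

namespace BanachBimod

variable {A : Type} [NonUnitalNormedRing A] [NormedSpace ℂ A]
  {X : Type} [NormedAddCommGroup X] [NormedSpace ℂ X] {M : BanachBimod A X}

/-- The map sending `x` to the inner derivation `a ↦ a·x − x·a`. Its values are plain functions on
`A` so that the topology on the target is that of pointwise convergence. -/
noncomputable def ad (M : BanachBimod A X) : X →L[ℂ] (A → X) :=
  .pi fun a => M.l a - M.r a

theorem approxInner_iff_mem_closure_range_ad {D : A →L[ℂ] X} :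
    M.ApproxInner D ↔ ⇑D ∈ closure (Set.range M.ad) := by
  constructor
  · rintro ⟨ι, φ, x, hφ, hx⟩
    exact mem_closure_of_tendsto (tendsto_pi_nhds.2 hx) (.of_forall fun i => ⟨x i, rfl⟩)
  · intro hD
    refine ⟨X, comap M.ad (𝓝 ⇑D), id, ?_, tendsto_pi_nhds.1 tendsto_comap⟩
    exact comap_neBot_iff.2 fun t ht =>
      let ⟨_, hyt, x, hx⟩ := mem_closure_iff_nhds.1 hD t ht
      ⟨x, hx ▸ hyt⟩

theorem ApproxInner.weakStarApproxInner {D : A →L[ℂ] (X →L[ℂ] ℂ)} (hD : M.dual.ApproxInner D) :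
    M.WeakStarApproxInner D := by
  obtain ⟨ι, φ, x, hφ, hx⟩ := hD
  exact ⟨ι, φ, x, hφ, fun a ξ =>
    ((ContinuousLinearMap.apply ℂ ℂ ξ).continuous.tendsto _).comp (hx a)⟩

theorem IsDerivation.inclusionInDoubleDual_comp {D : A →L[ℂ] X} (hD : M.IsDerivation D) :
    M.dual.dual.IsDerivation ((NormedSpace.inclusionInDoubleDual ℂ X).comp D) := fun a b => by
  ext ξ
  exact (congrArg ξ (hD a b)).trans (map_add ξ _ _)

theorem dual_dual_l_sub_r_apply (a : A) (F : (X →L[ℂ] ℂ) →L[ℂ] ℂ) (ξ : X →L[ℂ] ℂ) :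
    (M.dual.dual.l a F - M.dual.dual.r a F) ξ = F (ξ.comp (M.l a - M.r a)) := by
  rw [ContinuousLinearMap.comp_sub, map_sub]
  rfl

theorem approxInner_of_weakStarApproxInner_inclusionInDoubleDual_comp {D : A →L[ℂ] X}
    (hD : M.dual.WeakStarApproxInner ((NormedSpace.inclusionInDoubleDual ℂ X).comp D)) :
    M.ApproxInner D := by
  obtain ⟨ι, φ, F, hφ, hF⟩ := hD
  simp only [dual_dual_l_sub_r_apply] at hF
  exact approxInner_iff_mem_closure_range_ad.2 <|
    mem_closure_range_of_tendsto_apply_comp M.ad (F := fun i => F i) <| tendsto_apply_comp_pi hF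

end BanachBimod

section Amenability

variable {A : Type} [NonUnitalNormedRing A] [NormedSpace ℂ A]

theorem ApproximatelyContractible.approximatelyAmenable (hA : ApproximatelyContractible A) :
    ApproximatelyAmenable A :=
  fun X _ _ M D hD => hA (X →L[ℂ] ℂ) _ _ M.dual D hD

theorem ApproximatelyAmenable.weakStarApproximatelyAmenable (hA : ApproximatelyAmenable A) :
    WeakStarApproximatelyAmenable A :=
  fun X _ _ M D hD => (hA X _ _ M D hD).weakStarApproxInner

theorem WeakStarApproximatelyAmenable.approximatelyContractible
    (hA : WeakStarApproximatelyAmenable A) : ApproximatelyContractible A :=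
  fun X _ _ M _ hD =>
    BanachBimod.approxInner_of_weakStarApproxInner_inclusionInDoubleDual_comp <|
      hA (X →L[ℂ] ℂ) _ _ M.dual _ hD.inclusionInDoubleDual_comp

end Amenability

theorem approxAmenable_iff_weakStarApproxAmenable_general
    (A : Type) [NonUnitalNormedRing A] [NormedSpace ℂ A] :
    ApproximatelyAmenable A ↔ WeakStarApproximatelyAmenable A :=
  ⟨fun hA => hA.weakStarApproximatelyAmenable,
    fun hA => hA.approximatelyContractible.approximatelyAmenable⟩

/-- A Banach algebra `A` is approximately amenable if and only if it is weak*
approximately amenable. -/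
theorem approxAmenable_iff_weakStarApproxAmenable
    (A : Type) [NonUnitalNormedRing A] [NormedSpace ℂ A]
    [IsScalarTower ℂ A A] [SMulCommClass ℂ A A] [CompleteSpace A] :
    ApproximatelyAmenable A ↔ WeakStarApproximatelyAmenable A :=
  approxAmenable_iff_weakStarApproxAmenable_general A
end

section
/- A Banach algebra A is sequentially approximately contractible if and only if A is sequentially pseudo-amenable and has a bounded approximate identity. -/
open Filter Topology TensorProduct

/-!
Let `A#` be the unitization of `A`. If `A` is sequentially approximately contractible, then
`a ↦ a ⊗ 1 - 1 ⊗ a`, a derivation into the kernel of the multiplication `A# ⊗ A# → A#`, is a limit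
of inner derivations, which gives tensors `w n = 1 ⊗ 1 - F n ⊗ 1 - 1 ⊗ G n - m n` of product `1`
with `a·w n - w n·a → 0` for `a` in `A`. In particular `a * F n → a` and `G n * a → a`. Multiplying
this relation at `a = G j` on the right by `F k`, and using the uniform boundedness principle and
`‖x ⊗ y‖ = ‖x‖ * ‖y‖`, shows that `F` and `G` are bounded, so `F + G - F * G` is a bounded
approximate identity `e`. Along a subsequence of `e`, the images of `w n` under
`x ⊗ y ↦ x e ⊗ e y` form an approximate diagonal.

Conversely, let `u` be an approximate diagonal. A bounded approximate identity makes `π (u n)`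
bounded, again by uniform boundedness. For a derivation `D`, the inner derivations of the images of
`u n` under `b ⊗ c ↦ b·D c` approximate `a ↦ π (u n)·D a`, and correction terms turn this into an
approximation of `D` on modules that are not essential.
-/

namespace ProjectiveTensor

section Seminormed

variable {V W : Type} [SeminormedAddCommGroup V] [SeminormedAddCommGroup W]

theorem sum_norm_mul_norm_nonneg (L : List (V × W)) :
    0 ≤ (L.map fun p => ‖p.1‖ * ‖p.2‖).sum := by
  refine List.sum_nonneg fun r hr => ?_
  obtain ⟨p, -, rfl⟩ := List.mem_map.1 hr
  positivity

variable [NormedSpace ℂ V] [NormedSpace ℂ W]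

/-- The projective norm on the algebraic tensor product. It is scoped because Mathlib puts
a different norm on tensor products of inner product spaces. -/
noncomputable scoped instance instNorm : Norm (V ⊗[ℂ] W) :=
  ⟨projTensorSN (fun v => ‖v‖) (fun w => ‖w‖)⟩

theorem exists_list_sum_tmul_eq (t : V ⊗[ℂ] W) :
    ∃ L : List (V × W), t = (L.map fun p => p.1 ⊗ₜ[ℂ] p.2).sum := by
  obtain ⟨S, rfl⟩ := TensorProduct.exists_multiset t
  exact ⟨S.toList, by rw [← Multiset.sum_coe, ← Multiset.map_coe, Multiset.coe_toList]⟩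

theorem norm_nonneg' (t : V ⊗[ℂ] W) : 0 ≤ ‖t‖ := by
  refine Real.sInf_nonneg ?_
  rintro r ⟨L, -, rfl⟩
  exact sum_norm_mul_norm_nonneg L

theorem norm_list_sum_tmul_le (L : List (V × W)) :
    ‖(L.map fun p => p.1 ⊗ₜ[ℂ] p.2).sum‖ ≤ (L.map fun p => ‖p.1‖ * ‖p.2‖).sum := by
  refine csInf_le ⟨0, ?_⟩ ⟨L, rfl, rfl⟩
  rintro r ⟨L, -, rfl⟩
  exact sum_norm_mul_norm_nonneg L

theorem norm_tmul_le (x : V) (y : W) : ‖x ⊗ₜ[ℂ] y‖ ≤ ‖x‖ * ‖y‖ := by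
  simpa using norm_list_sum_tmul_le [(x, y)]

theorem exists_list_sum_norm_lt {t : V ⊗[ℂ] W} {r : ℝ} (hr : ‖t‖ < r) :
    ∃ L : List (V × W), t = (L.map fun p => p.1 ⊗ₜ[ℂ] p.2).sum ∧
      (L.map fun p => ‖p.1‖ * ‖p.2‖).sum < r := by
  have hne : {r : ℝ | ∃ L : List (V × W), t = (L.map fun p => p.1 ⊗ₜ[ℂ] p.2).sum ∧
      r = (L.map fun p => ‖p.1‖ * ‖p.2‖).sum}.Nonempty := by
    obtain ⟨L, hL⟩ := exists_list_sum_tmul_eq t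
    exact ⟨_, L, hL, rfl⟩
  obtain ⟨_, ⟨L', ht, rfl⟩, hlt⟩ := exists_lt_of_csInf_lt hne hr
  exact ⟨L', ht, hlt⟩

theorem norm_add_le' (s t : V ⊗[ℂ] W) : ‖s + t‖ ≤ ‖s‖ + ‖t‖ := by
  refine le_of_forall_pos_le_add fun ε hε => ?_
  obtain ⟨L, hs, hL⟩ := exists_list_sum_norm_lt (lt_add_of_pos_right ‖s‖ (half_pos hε))
  obtain ⟨L', ht, hL'⟩ := exists_list_sum_norm_lt (lt_add_of_pos_right ‖t‖ (half_pos hε))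
  have hLL' := norm_list_sum_tmul_le (L ++ L')
  simp only [List.map_append, List.sum_append, ← hs, ← ht] at hLL'
  linarith

theorem le_mul_norm_of_subadditive {p : V ⊗[ℂ] W → ℝ} {C : ℝ} (hC : 0 ≤ C) (hp0 : p 0 ≤ 0)
    (hadd : ∀ s t, p (s + t) ≤ p s + p t) (htmul : ∀ x y, p (x ⊗ₜ[ℂ] y) ≤ C * (‖x‖ * ‖y‖))
    (t : V ⊗[ℂ] W) : p t ≤ C * ‖t‖ := by
  have hlist (L : List (V × W)) : p (L.map fun p => p.1 ⊗ₜ[ℂ] p.2).sum ≤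
      C * (L.map fun p => ‖p.1‖ * ‖p.2‖).sum := by
    induction L with
    | nil => simpa using hp0
    | cons q L ih =>
      simp only [List.map_cons, List.sum_cons, mul_add]
      exact (hadd _ _).trans (add_le_add (htmul _ _) ih)
  obtain ⟨L, hL⟩ := exists_list_sum_tmul_eq t
  refine le_of_le_of_eq ?_ (Real.sInf_smul_of_nonneg hC _)
  refine le_csInf ⟨_, _, ⟨L, hL, rfl⟩, rfl⟩ ?_
  rintro _ ⟨_, ⟨L', rfl, rfl⟩, rfl⟩
  exact hlist L'

theorem norm_map_le_mul_norm {Z : Type*} [SeminormedAddCommGroup Z] [Module ℂ Z]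
    (f : V ⊗[ℂ] W →ₗ[ℂ] Z) {C : ℝ} (hC : 0 ≤ C)
    (hf : ∀ x y, ‖f (x ⊗ₜ[ℂ] y)‖ ≤ C * (‖x‖ * ‖y‖)) (t : V ⊗[ℂ] W) : ‖f t‖ ≤ C * ‖t‖ :=
  le_mul_norm_of_subadditive (p := fun t => ‖f t‖) hC (by simp)
    (fun s t => by simpa only [map_add] using norm_add_le _ _) hf t

theorem norm_smul_le' (c : ℂ) (t : V ⊗[ℂ] W) : ‖c • t‖ ≤ ‖c‖ * ‖t‖ := by
  have hzero : ‖(0 : V ⊗[ℂ] W)‖ ≤ 0 := by simpa using norm_tmul_le (0 : V) (0 : W)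
  refine le_mul_norm_of_subadditive (p := fun t => ‖c • t‖) (norm_nonneg c)
    (by simpa only [smul_zero]) (fun s t => by simpa only [smul_add] using norm_add_le' _ _)
    (fun x y => ?_) t
  simpa only [TensorProduct.smul_tmul', norm_smul, mul_assoc] using norm_tmul_le (c • x) y

theorem seminormedSpaceCore : SeminormedSpace.Core ℂ (V ⊗[ℂ] W) where
  norm_nonneg := norm_nonneg'
  norm_smul c t := by
    refine le_antisymm (norm_smul_le' c t) ?_
    rcases eq_or_ne c 0 with rfl | hc
    · simpa using norm_nonneg' _
    · have h := norm_smul_le' c⁻¹ (c • t)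
      rwa [inv_smul_smul₀ hc, norm_inv, le_inv_mul_iff₀ (norm_pos_iff.2 hc)] at h
  norm_triangle := norm_add_le'

end Seminormed

section Slice

variable {V W : Type} [AddCommGroup V] [Module ℂ V]

/-- The slice map `x ⊗ y ↦ f y • x` of a functional `f` on the right factor. -/
def slice [AddCommGroup W] [Module ℂ W] (f : W →ₗ[ℂ] ℂ) : V ⊗[ℂ] W →ₗ[ℂ] V :=
  TensorProduct.rid ℂ V ∘ₗ f.lTensor V

theorem slice_tmul [AddCommGroup W] [Module ℂ W] (f : W →ₗ[ℂ] ℂ) (x : V) (y : W) :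
    slice f (x ⊗ₜ[ℂ] y) = f y • x := rfl

theorem slice_basis_coord [AddCommGroup W] [Module ℂ W] {ι : Type*} (b : Module.Basis ι ℂ W)
    [DecidableEq ι] (t : V ⊗[ℂ] W) (i : ι) :
    slice (b.coord i) t = TensorProduct.equivFinsuppOfBasisRight b t i := by
  induction t with
  | zero => simp
  | tmul x y => simp [slice_tmul]
  | add s t hs ht => simp [hs, ht]

/-- Hahn–Banach extends the coordinate functionals of a finite-dimensional subspace. -/
theorem eq_zero_of_forall_slice_eq_zero [NormedAddCommGroup W] [NormedSpace ℂ W] {t : V ⊗[ℂ] W}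
    (h : ∀ f : W →L[ℂ] ℂ, slice (f : W →ₗ[ℂ] ℂ) t = 0) : t = 0 := by
  obtain ⟨S, hS, ht⟩ := TensorProduct.exists_finite_submodule_right_of_setFinite {t}
    (Set.finite_singleton t)
  obtain ⟨s, rfl⟩ := ht rfl
  let b := Module.finBasis ℂ S
  suffices s = 0 by rw [this, map_zero]
  refine (TensorProduct.equivFinsuppOfBasisRight b).injective (Finsupp.ext fun i => ?_)
  obtain ⟨f, hf⟩ := SeparatingDual.dualMap_surjective_iff.2 S.injective_subtype (b.coord i)
  rw [map_zero, Finsupp.zero_apply, ← slice_basis_coord, ← hf, ← h f]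
  simp only [slice, LinearMap.comp_apply]
  rw [← LinearMap.lTensor_comp_apply]
  rfl

end Slice

section Normed

variable {V W : Type} [NormedAddCommGroup V] [NormedSpace ℂ V]
  [NormedAddCommGroup W] [NormedSpace ℂ W]

theorem norm_slice_le (f : W →L[ℂ] ℂ) (t : V ⊗[ℂ] W) :
    ‖slice (f : W →ₗ[ℂ] ℂ) t‖ ≤ ‖f‖ * ‖t‖ := by
  refine norm_map_le_mul_norm _ (norm_nonneg f) (fun x y => ?_) t
  rw [slice_tmul, norm_smul, mul_comm ‖x‖, ← mul_assoc]
  gcongr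
  exact f.le_opNorm y

theorem norm_tmul (x : V) (y : W) : ‖x ⊗ₜ[ℂ] y‖ = ‖x‖ * ‖y‖ := by
  refine le_antisymm (norm_tmul_le x y) ?_
  obtain ⟨f, hf, hfy⟩ := exists_dual_vector'' ℂ y
  calc ‖x‖ * ‖y‖ = ‖slice (f : W →ₗ[ℂ] ℂ) (x ⊗ₜ[ℂ] y)‖ := by
        simp [slice_tmul, norm_smul, hfy, mul_comm]
    _ ≤ ‖f‖ * ‖x ⊗ₜ[ℂ] y‖ := norm_slice_le f _
    _ ≤ ‖x ⊗ₜ[ℂ] y‖ := mul_le_of_le_one_left (norm_nonneg' _) hf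

theorem normedSpaceCore : NormedSpace.Core ℂ (V ⊗[ℂ] W) where
  toCore := seminormedSpaceCore
  norm_eq_zero_iff t := by
    refine ⟨fun ht => eq_zero_of_forall_slice_eq_zero fun f => ?_, ?_⟩
    · simpa [ht] using norm_slice_le f t
    · rintro rfl
      simpa using norm_tmul (0 : V) (0 : W)

noncomputable scoped instance instNormedAddCommGroup : NormedAddCommGroup (V ⊗[ℂ] W) :=
  .ofCore normedSpaceCore

noncomputable scoped instance instNormedSpace : NormedSpace ℂ (V ⊗[ℂ] W) :=
  .ofCore normedSpaceCore

/-- The tensor product map `x ↦ y ↦ x ⊗ y` as a bounded bilinear map. -/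
noncomputable def tmulCLM : V →L[ℂ] W →L[ℂ] V ⊗[ℂ] W :=
  (TensorProduct.mk ℂ V W).mkContinuous₂ 1 fun x y => by simp [norm_tmul]

@[simp]
theorem tmulCLM_apply (x : V) (y : W) : tmulCLM x y = x ⊗ₜ[ℂ] y := rfl

variable {Z : Type*} [NormedAddCommGroup Z] [NormedSpace ℂ Z]

/-- The bounded linear map `x ⊗ y ↦ B x y` induced by a bounded bilinear map `B`. -/
noncomputable def liftCLM (B : V →L[ℂ] W →L[ℂ] Z) : V ⊗[ℂ] W →L[ℂ] Z :=
  (TensorProduct.lift (ContinuousLinearMap.coeLM ℂ ∘ₗ (B : V →ₗ[ℂ] W →L[ℂ] Z))).mkContinuous ‖B‖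
    (norm_map_le_mul_norm _ (norm_nonneg B) fun x y => by
      simpa [mul_assoc] using B.le_opNorm₂ x y)

@[simp]
theorem liftCLM_tmul (B : V →L[ℂ] W →L[ℂ] Z) (x : V) (y : W) :
    liftCLM B (x ⊗ₜ[ℂ] y) = B x y := rfl

theorem norm_map_le {V' W' : Type} [NormedAddCommGroup V'] [NormedSpace ℂ V']
    [NormedAddCommGroup W'] [NormedSpace ℂ W'] {f : V →ₗ[ℂ] V'} {g : W →ₗ[ℂ] W'} {C C' : ℝ}
    (hC : 0 ≤ C) (hC' : 0 ≤ C') (hf : ∀ x, ‖f x‖ ≤ C * ‖x‖) (hg : ∀ y, ‖g y‖ ≤ C' * ‖y‖)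
    (t : V ⊗[ℂ] W) : ‖TensorProduct.map f g t‖ ≤ C * C' * ‖t‖ := by
  refine norm_map_le_mul_norm _ (mul_nonneg hC hC') (fun x y => ?_) t
  rw [TensorProduct.map_tmul, norm_tmul, mul_mul_mul_comm]
  exact mul_le_mul (hf x) (hg y) (norm_nonneg _) (mul_nonneg hC (norm_nonneg x))

end Normed

end ProjectiveTensor

open scoped ProjectiveTensor

section TensorBimodule

variable {C : Type} [NonUnitalRing C] [Module ℂ C]

@[simp]
theorem tactL_tmul [SMulCommClass ℂ C C] (a x y : C) :
    tactL C a (x ⊗ₜ[ℂ] y) = (a * x) ⊗ₜ[ℂ] y := rfl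

theorem tactL_mul [SMulCommClass ℂ C C] (a b : C) (t : C ⊗[ℂ] C) :
    tactL C (a * b) t = tactL C a (tactL C b t) := by
  induction t with
  | zero => simp
  | tmul x y => simp [mul_assoc]
  | add s t hs ht => simp only [map_add, hs, ht]

@[simp]
theorem tactR_tmul [IsScalarTower ℂ C C] (a x y : C) :
    tactR C a (x ⊗ₜ[ℂ] y) = x ⊗ₜ[ℂ] (y * a) := rfl

theorem tactR_mul [IsScalarTower ℂ C C] (a b : C) (t : C ⊗[ℂ] C) :
    tactR C (a * b) t = tactR C b (tactR C a t) := by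
  induction t with
  | zero => simp
  | tmul x y => simp [mul_assoc]
  | add s t hs ht => simp only [map_add, hs, ht]

variable [IsScalarTower ℂ C C] [SMulCommClass ℂ C C]

theorem tactL_tactR (a b : C) (t : C ⊗[ℂ] C) :
    tactL C a (tactR C b t) = tactR C b (tactL C a t) := by
  induction t with
  | zero => simp
  | tmul x y => simp
  | add s t hs ht => simp only [map_add, hs, ht]

@[simp]
theorem tpi_tmul (x y : C) : tpi C (x ⊗ₜ[ℂ] y) = x * y := rfl

theorem tpi_tactL (a : C) (t : C ⊗[ℂ] C) : tpi C (tactL C a t) = a * tpi C t := by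
  induction t with
  | zero => simp
  | tmul x y => simp [mul_assoc]
  | add s t hs ht => simp only [map_add, hs, ht, mul_add]

theorem tpi_tactR (a : C) (t : C ⊗[ℂ] C) : tpi C (tactR C a t) = tpi C t * a := by
  induction t with
  | zero => simp
  | tmul x y => simp [mul_assoc]
  | add s t hs ht => simp only [map_add, hs, ht, add_mul]

/-- The map `x ⊗ y ↦ x e ⊗ e y`, which multiplies a tensor by `e` on the inner sides and so
commutes with both actions of `C`. -/
def innerSandwich (e : C) : C ⊗[ℂ] C →ₗ[ℂ] C ⊗[ℂ] C :=
  TensorProduct.map (LinearMap.mulRight ℂ e) (LinearMap.mulLeft ℂ e)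

@[simp]
theorem innerSandwich_tmul (e x y : C) :
    innerSandwich e (x ⊗ₜ[ℂ] y) = (x * e) ⊗ₜ[ℂ] (e * y) := rfl

theorem innerSandwich_tactL (e a : C) (t : C ⊗[ℂ] C) :
    innerSandwich e (tactL C a t) = tactL C a (innerSandwich e t) := by
  induction t with
  | zero => simp
  | tmul x y => simp [mul_assoc]
  | add s t hs ht => simp only [map_add, hs, ht]

theorem innerSandwich_tactR (e a : C) (t : C ⊗[ℂ] C) :
    innerSandwich e (tactR C a t) = tactR C a (innerSandwich e t) := by
  induction t with
  | zero => simp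
  | tmul x y => simp [mul_assoc]
  | add s t hs ht => simp only [map_add, hs, ht]

end TensorBimodule

section BoundedBimodule

variable {A : Type} [NonUnitalNormedRing A] [NormedSpace ℂ A]

theorem norm_tactL_le [SMulCommClass ℂ A A] (a : A) (t : A ⊗[ℂ] A) : ‖tactL A a t‖ ≤ ‖a‖ * ‖t‖ := by
  simpa [tactL] using ProjectiveTensor.norm_map_le (g := LinearMap.id) (norm_nonneg a) zero_le_one
    (norm_mul_le a) (fun y => by simp) t

theorem norm_tactR_le [IsScalarTower ℂ A A] {b : A} {C : ℝ} (hC : 0 ≤ C)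
    (hb : ∀ y, ‖y * b‖ ≤ C * ‖y‖) (t : A ⊗[ℂ] A) : ‖tactR A b t‖ ≤ C * ‖t‖ := by
  simpa [tactR] using ProjectiveTensor.norm_map_le (f := LinearMap.id)
    (g := LinearMap.mulRight ℂ b) zero_le_one hC (fun x => by simp) hb t

variable [IsScalarTower ℂ A A] [SMulCommClass ℂ A A]

variable (A) in
/-- The left action of `A` on `A ⊗ A` as a bounded bilinear map. -/
noncomputable def leftAct : A →L[ℂ] A ⊗[ℂ] A →L[ℂ] A ⊗[ℂ] A :=
  (LinearMap.rTensorHom A ∘ₗ LinearMap.mul ℂ A).mkContinuous₂ 1 fun a t => by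
    rw [one_mul]
    exact norm_tactL_le a t

variable (A) in
/-- The right action of `A` on `A ⊗ A` as a bounded bilinear map. -/
noncomputable def rightAct : A →L[ℂ] A ⊗[ℂ] A →L[ℂ] A ⊗[ℂ] A :=
  (LinearMap.lTensorHom A ∘ₗ (LinearMap.mul ℂ A).flip).mkContinuous₂ 1 fun a t => by
    rw [one_mul]
    exact norm_tactR_le (norm_nonneg a) (fun y => (norm_mul_le y a).trans_eq (mul_comm _ _)) t

@[simp]
theorem leftAct_apply (a : A) (t : A ⊗[ℂ] A) : leftAct A a t = tactL A a t := rfl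

@[simp]
theorem rightAct_apply (a : A) (t : A ⊗[ℂ] A) : rightAct A a t = tactR A a t := rfl

variable (A) in
/-- The multiplication map `A ⊗ A → A` as a bounded linear map. -/
noncomputable def tensorMulCLM : A ⊗[ℂ] A →L[ℂ] A :=
  ProjectiveTensor.liftCLM (ContinuousLinearMap.mul ℂ A)

@[simp]
theorem tensorMulCLM_apply (t : A ⊗[ℂ] A) : tensorMulCLM A t = tpi A t := rfl

theorem norm_innerSandwich_le (e : A) (t : A ⊗[ℂ] A) :
    ‖innerSandwich e t‖ ≤ ‖e‖ * ‖e‖ * ‖t‖ :=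
  ProjectiveTensor.norm_map_le (norm_nonneg e) (norm_nonneg e)
    (fun x => by simpa [mul_comm] using norm_mul_le x e) (fun y => by simpa using norm_mul_le e y) t

end BoundedBimodule

section Limits

variable {ι 𝕜 E F G : Type*} [NontriviallyNormedField 𝕜] [SeminormedAddCommGroup E]
  [SeminormedAddCommGroup F] [SeminormedAddCommGroup G] {l : Filter ι}

theorem exists_strictMono_tendsto_diagonal_zero {f : ℕ → ℕ → E}
    (h : ∀ n, Tendsto (f n) atTop (𝓝 0)) :
    ∃ φ : ℕ → ℕ, StrictMono φ ∧ Tendsto (fun n => f n (φ n)) atTop (𝓝 0) := by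
  obtain ⟨φ, hφ, hlt⟩ := extraction_forall_of_eventually (P := fun n k => ‖f n k‖ < 1 / (n + 1 : ℝ))
    fun n => (h n).norm.eventually_lt_const (by simpa using Nat.cast_add_one_pos n)
  exact ⟨φ, hφ, squeeze_zero_norm (fun n => (hlt n).le) tendsto_one_div_add_atTop_nhds_zero_nat⟩

variable [NormedSpace 𝕜 E] [NormedSpace 𝕜 F] [NormedSpace 𝕜 G]

theorem tendsto_bilin_zero_of_isBoundedUnder_right (B : E →L[𝕜] F →L[𝕜] G) {f : ι → E} {g : ι → F}
    (hf : Tendsto f l (𝓝 0)) (hg : IsBoundedUnder (· ≤ ·) l (norm ∘ g)) :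
    Tendsto (fun i => B (f i) (g i)) l (𝓝 0) :=
  hf.op_zero_isBoundedUnder_le' hg (fun x y => B x y) ⟨‖B‖, B.le_opNorm₂⟩

theorem tendsto_bilin_zero_of_isBoundedUnder_left (B : E →L[𝕜] F →L[𝕜] G) {f : ι → E} {g : ι → F}
    (hf : IsBoundedUnder (· ≤ ·) l (norm ∘ f)) (hg : Tendsto g l (𝓝 0)) :
    Tendsto (fun i => B (f i) (g i)) l (𝓝 0) :=
  tendsto_bilin_zero_of_isBoundedUnder_right B.flip hg hf

theorem exists_norm_le_of_tendsto [CompleteSpace E] {T : ℕ → E →L[𝕜] F} {T' : E → F}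
    (h : ∀ x, Tendsto (fun n => T n x) atTop (𝓝 (T' x))) : ∃ C, ∀ n, ‖T n‖ ≤ C :=
  banach_steinhaus fun x => by
    obtain ⟨C, hC⟩ := (h x).norm.bddAbove_range
    exact ⟨C, fun n => hC ⟨n, rfl⟩⟩

end Limits

section ApproximateIdentity

variable {ι R : Type*} [NonUnitalSeminormedRing R] {l : Filter ι} {a : R}

theorem tendsto_mul_mul_of_isBoundedUnder {e : ι → R} (he : IsBoundedUnder (· ≤ ·) l (norm ∘ e))
    (h : Tendsto (fun i => e i * a) l (𝓝 a)) : Tendsto (fun i => e i * (e i * a)) l (𝓝 a) := by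
  have h0 : Tendsto (fun i => e i * (e i * a - a)) l (𝓝 0) :=
    isBoundedUnder_le_mul_tendsto_zero he (tendsto_sub_nhds_zero_iff.2 h)
  simpa [mul_sub] using h0.add h

theorem tendsto_mul_mul_of_isBoundedUnder' {e : ι → R} (he : IsBoundedUnder (· ≤ ·) l (norm ∘ e))
    (h : Tendsto (fun i => a * e i) l (𝓝 a)) : Tendsto (fun i => a * e i * e i) l (𝓝 a) := by
  have h0 : Tendsto (fun i => (a * e i - a) * e i) l (𝓝 0) :=
    (tendsto_sub_nhds_zero_iff.2 h).zero_mul_isBoundedUnder_le he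
  simpa [sub_mul] using h0.add h

theorem tendsto_mul_add_sub_mul {f g : ι → R} (hf : Tendsto (fun i => a * f i) l (𝓝 a))
    (hg : IsBoundedUnder (· ≤ ·) l (norm ∘ g)) :
    Tendsto (fun i => a * (f i + g i - f i * g i)) l (𝓝 a) := by
  have h0 : Tendsto (fun i => (a * f i - a) * g i) l (𝓝 0) :=
    (tendsto_sub_nhds_zero_iff.2 hf).zero_mul_isBoundedUnder_le hg
  simpa [sub_zero] using (hf.sub h0).congr fun i => by noncomm_ring

theorem tendsto_add_sub_mul_mul {f g : ι → R} (hf : IsBoundedUnder (· ≤ ·) l (norm ∘ f))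
    (hg : Tendsto (fun i => g i * a) l (𝓝 a)) :
    Tendsto (fun i => (f i + g i - f i * g i) * a) l (𝓝 a) := by
  have h0 : Tendsto (fun i => f i * (g i * a - a)) l (𝓝 0) :=
    isBoundedUnder_le_mul_tendsto_zero hf (tendsto_sub_nhds_zero_iff.2 hg)
  simpa [sub_zero] using (hg.sub h0).congr fun i => by noncomm_ring

theorem exists_norm_mul_le_of_tendsto {𝕜 A : Type*} [NontriviallyNormedField 𝕜]
    [NonUnitalSeminormedRing A] [NormedSpace 𝕜 A] [IsScalarTower 𝕜 A A] [SMulCommClass 𝕜 A A]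
    [CompleteSpace A] {f : ℕ → A} (h : ∀ a, Tendsto (fun n => a * f n) atTop (𝓝 a)) :
    ∃ C, 0 ≤ C ∧ ∀ a n, ‖a * f n‖ ≤ C * ‖a‖ := by
  obtain ⟨C, hC⟩ :=
    exists_norm_le_of_tendsto (T := fun n => (ContinuousLinearMap.mul 𝕜 A).flip (f n)) h
  exact ⟨C, (norm_nonneg _).trans (hC 0), fun a n => ContinuousLinearMap.le_of_opNorm_le _ (hC n) a⟩

end ApproximateIdentity

section TensorLimits

variable {A : Type} {ι : Type*} [NonUnitalNormedRing A] [NormedSpace ℂ A]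
  [SMulCommClass ℂ A A] {l : Filter ι} {e : ι → A}

theorem tendsto_tactL (h : ∀ a, Tendsto (fun i => e i * a) l (𝓝 a)) (t : A ⊗[ℂ] A) :
    Tendsto (fun i => tactL A (e i) t) l (𝓝 t) := by
  induction t with
  | zero => simpa using tendsto_const_nhds
  | tmul x y =>
    exact ((ProjectiveTensor.tmulCLM (V := A).flip y).continuous.tendsto x).comp (h x)
  | add s t hs ht => simpa only [map_add] using hs.add ht

variable [IsScalarTower ℂ A A]

theorem tendsto_tpi_innerSandwich (he : IsBoundedUnder (· ≤ ·) l (norm ∘ e))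
    (h : ∀ a, Tendsto (fun i => e i * a) l (𝓝 a)) (t : A ⊗[ℂ] A) :
    Tendsto (fun i => tpi A (innerSandwich (e i) t)) l (𝓝 (tpi A t)) := by
  induction t with
  | zero => simpa using tendsto_const_nhds
  | tmul x y =>
    simpa [mul_assoc] using (tendsto_mul_mul_of_isBoundedUnder he (h y)).const_mul x
  | add s t hs ht => simpa only [map_add] using hs.add ht

end TensorLimits

section Diagonals

variable {A : Type} [NonUnitalNormedRing A] [NormedSpace ℂ A]
  [IsScalarTower ℂ A A] [SMulCommClass ℂ A A]

/-- A sequential approximate diagonal of `A`. The tensors are taken in the algebraic tensor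
product, which is dense in `A ⊗̂ A`. -/
structure IsSeqApproxDiagonal (u : ℕ → A ⊗[ℂ] A) : Prop where
  tendsto_comm : ∀ a, Tendsto (fun n => tactL A a (u n) - tactR A a (u n)) atTop (𝓝 0)
  tendsto_tpi_mul : ∀ a, Tendsto (fun n => tpi A (u n) * a) atTop (𝓝 a)

theorem seqPseudoAmenable_iff :
    SeqPseudoAmenable A ↔ ∃ u : ℕ → A ⊗[ℂ] A, IsSeqApproxDiagonal u := by
  refine exists_congr fun u => ⟨fun h => ⟨fun a => ?_, fun a => ?_⟩,
    fun h => ⟨fun a => ?_, fun a => ?_⟩⟩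
  · exact tendsto_zero_iff_norm_tendsto_zero.2 (h.1 a)
  · exact tendsto_iff_norm_sub_tendsto_zero.2 (h.2 a)
  · exact tendsto_zero_iff_norm_tendsto_zero.1 (h.tendsto_comm a)
  · exact tendsto_iff_norm_sub_tendsto_zero.1 (h.tendsto_tpi_mul a)

theorem IsSeqApproxDiagonal.tendsto_mul_tpi {u : ℕ → A ⊗[ℂ] A} (hu : IsSeqApproxDiagonal u)
    (a : A) : Tendsto (fun n => a * tpi A (u n)) atTop (𝓝 a) := by
  have hcomm := ((tensorMulCLM A).continuous.tendsto 0).comp (hu.tendsto_comm a)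
  rw [map_zero] at hcomm
  simpa [Function.comp_def, tpi_tactL, tpi_tactR] using hcomm.add (hu.tendsto_tpi_mul a)

/-- The map `a ↦ a·m - m·a + a ⊗ g - f ⊗ a`. In `A# ⊗ A#`, with `A#` the unitization, it is the
commutator of `m + 1 ⊗ g + f ⊗ 1` with `a`, up to terms of the form `1 ⊗ x` and `x ⊗ 1`. -/
noncomputable def defect (m : A ⊗[ℂ] A) (f g : A) : A →L[ℂ] A ⊗[ℂ] A :=
  (leftAct A).flip m - (rightAct A).flip m + ProjectiveTensor.tmulCLM.flip g -
    ProjectiveTensor.tmulCLM f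

@[simp]
theorem defect_apply (m : A ⊗[ℂ] A) (f g a : A) :
    defect m f g a = tactL A a m - tactR A a m + a ⊗ₜ[ℂ] g - f ⊗ₜ[ℂ] a := rfl

theorem tpi_defect (m : A ⊗[ℂ] A) (f g a : A) :
    tpi A (defect m f g a) = a * (tpi A m + g) - (tpi A m + f) * a := by
  simp only [defect_apply, map_add, map_sub, tpi_tactL, tpi_tactR, tpi_tmul]
  noncomm_ring

theorem tactR_defect (b : A) (m : A ⊗[ℂ] A) (f g a : A) :
    tactR A b (defect m f g a) = tactL A a (tactR A b m) - tactR A (a * b) m +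
      (a ⊗ₜ[ℂ] (g * b) - f ⊗ₜ[ℂ] (a * b)) := by
  simp only [defect_apply, map_add, map_sub, tactR_tmul, tactR_mul, tactL_tactR]
  abel

/-- The sequences `m`, `F`, `G` encode the tensors `w n = 1 ⊗ 1 - F n ⊗ 1 - 1 ⊗ G n - m n` over
the unitization of `A`: the conditions say that `w n` has product `1`, and that `a·w n - w n·a → 0`
for all `a` in `A`. -/
structure IsUnitizationApproxDiagonal (m : ℕ → A ⊗[ℂ] A) (F G : ℕ → A) : Prop where
  tpi_add_add : ∀ n, tpi A (m n) + F n + G n = 0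
  tendsto_defect : ∀ a, Tendsto (fun n => defect (m n) (F n) (G n) a) atTop (𝓝 0)
  tendsto_mul : ∀ a, Tendsto (fun n => a * F n) atTop (𝓝 a)

theorem IsUnitizationApproxDiagonal.tendsto_mul' {m : ℕ → A ⊗[ℂ] A} {F G : ℕ → A}
    (h : IsUnitizationApproxDiagonal m F G) (a : A) :
    Tendsto (fun n => G n * a) atTop (𝓝 a) := by
  have hπ := ((tensorMulCLM A).continuous.tendsto 0).comp (h.tendsto_defect a)
  rw [map_zero] at hπ
  have heq (n : ℕ) : tpi A (defect (m n) (F n) (G n) a) + a * F n = G n * a := by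
    have hG : tpi A (m n) + G n = -F n :=
      eq_neg_of_add_eq_zero_left (by rw [← h.tpi_add_add n]; abel)
    have hF : tpi A (m n) + F n = -G n := eq_neg_of_add_eq_zero_left (h.tpi_add_add n)
    rw [tpi_defect, hG, hF]
    noncomm_ring
  simpa only [Function.comp_def, tensorMulCLM_apply, heq, zero_add] using
    hπ.add (h.tendsto_mul a)

end Diagonals

namespace BanachBimod

section OfBilinear

variable {A : Type} [NonUnitalNormedRing A] [NormedSpace ℂ A] {X : Type} [NormedAddCommGroup X]
  [NormedSpace ℂ X]

/-- The Banach bimodule whose actions are given by two bounded bilinear maps. -/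
@[simps]
noncomputable def ofBilinear (L R : A →L[ℂ] X →L[ℂ] X)
    (hL : ∀ a b x, L (a * b) x = L a (L b x)) (hR : ∀ a b x, R (a * b) x = R b (R a x))
    (hLR : ∀ a b x, L a (R b x) = R b (L a x)) : BanachBimod A X where
  l := L
  r := R
  l_add := map_add L
  l_smul := map_smul L
  r_add := map_add R
  r_smul := map_smul R
  l_bound := ⟨‖L‖, L.le_opNorm⟩
  r_bound := ⟨‖R‖, R.le_opNorm⟩
  l_mul a b := ContinuousLinearMap.ext (hL a b)
  r_mul a b := ContinuousLinearMap.ext (hR a b)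
  lr_comm a b := ContinuousLinearMap.ext (hLR a b)

/-- The left action of a Banach bimodule as a bounded bilinear map. -/
noncomputable def lCLM (M : BanachBimod A X) : A →L[ℂ] X →L[ℂ] X :=
  LinearMap.mkContinuousOfExistsBound ⟨⟨M.l, M.l_add⟩, M.l_smul⟩ M.l_bound

@[simp]
theorem lCLM_apply (M : BanachBimod A X) (a : A) : M.lCLM a = M.l a := rfl

end OfBilinear

end BanachBimod

section KernelBimodule

open ContinuousLinearMap (prodL mul fst snd inr)
open ProjectiveTensor (tmulCLM)

variable (A : Type) [NonUnitalNormedRing A] [NormedSpace ℂ A]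
  [IsScalarTower ℂ A A] [SMulCommClass ℂ A A]

/-- The left action `a·(t, x) = (a·t - a ⊗ (π t + x), a x)` of `kernelBimod`. -/
noncomputable def kernelLeftAct : A →L[ℂ] (A ⊗[ℂ] A) × A →L[ℂ] (A ⊗[ℂ] A) × A :=
  (prodL ℂ).toContinuousLinearMap ∘L ContinuousLinearMap.prod
    ((leftAct A).bilinearComp (.id ℂ A) (fst ℂ (A ⊗[ℂ] A) A) -
      tmulCLM.bilinearComp (.id ℂ A) (tensorMulCLM A ∘L fst ℂ _ A + snd ℂ _ A))
    ((mul ℂ A).bilinearComp (.id ℂ A) (snd ℂ (A ⊗[ℂ] A) A))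

/-- The right action `(t, x)·a = (t·a + x ⊗ a, 0)` of `kernelBimod`. -/
noncomputable def kernelRightAct : A →L[ℂ] (A ⊗[ℂ] A) × A →L[ℂ] (A ⊗[ℂ] A) × A :=
  (prodL ℂ).toContinuousLinearMap ∘L ContinuousLinearMap.prod
    ((rightAct A).bilinearComp (.id ℂ A) (fst ℂ (A ⊗[ℂ] A) A) +
      (tmulCLM (V := A)).flip.bilinearComp (.id ℂ A) (snd ℂ (A ⊗[ℂ] A) A))
    (0 : A →L[ℂ] (A ⊗[ℂ] A) × A →L[ℂ] A)

variable {A}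

theorem kernelLeftAct_apply (a : A) (t : A ⊗[ℂ] A) (x : A) :
    kernelLeftAct A a (t, x) = (tactL A a t - a ⊗ₜ[ℂ] (tpi A t + x), a * x) := by
  simp [kernelLeftAct]

theorem kernelRightAct_apply (a : A) (t : A ⊗[ℂ] A) (x : A) :
    kernelRightAct A a (t, x) = (tactR A a t + x ⊗ₜ[ℂ] a, 0) := by
  simp [kernelRightAct]

variable (A) in
/-- The `A`-bimodule `ker (π : A# ⊗ A# → A#)` with `A#` the unitization of `A`, cut down to the
elements `t + x ⊗ 1 - 1 ⊗ (π t + x)`, which are stored as pairs `(t, x)`. -/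
noncomputable def kernelBimod : BanachBimod A ((A ⊗[ℂ] A) × A) :=
  .ofBilinear (kernelLeftAct A) (kernelRightAct A)
    (fun a b ⟨t, x⟩ => by
      simp [kernelLeftAct_apply, tactL_mul, tpi_tactL, TensorProduct.tmul_add, mul_assoc])
    (fun a b ⟨t, x⟩ => by simp [kernelRightAct_apply, tactR_mul])
    (fun a b ⟨t, x⟩ => by
      simp only [kernelLeftAct_apply, kernelRightAct_apply, map_add, map_sub, tactL_tmul,
        tactR_tmul, tactL_tactR, tpi_tactR, tpi_tmul, tmul_add, add_zero, mul_zero, Prod.mk.injEq,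
        and_true]
      abel)

theorem kernelBimod_sub (a : A) (m : A ⊗[ℂ] A) (f : A) :
    (kernelBimod A).l a (m, f) - (kernelBimod A).r a (m, f) =
      (defect m f (-(tpi A m + f)) a, a * f) := by
  simp only [kernelBimod, BanachBimod.ofBilinear_l, BanachBimod.ofBilinear_r, kernelLeftAct_apply,
    kernelRightAct_apply, defect_apply, tmul_add, tmul_neg, Prod.mk_sub_mk, sub_zero, neg_add_rev,
    Prod.mk.injEq, and_true]
  abel

theorem isDerivation_inr : (kernelBimod A).IsDerivation (inr ℂ (A ⊗[ℂ] A) A) := fun a b => by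
  simp [kernelBimod, kernelLeftAct_apply, kernelRightAct_apply]

theorem SeqApproximatelyContractible.exists_isUnitizationApproxDiagonal
    (h : SeqApproximatelyContractible A) :
    ∃ (m : ℕ → A ⊗[ℂ] A) (F G : ℕ → A), IsUnitizationApproxDiagonal m F G := by
  obtain ⟨y, hy⟩ := h _ _ _ (kernelBimod A) (inr ℂ (A ⊗[ℂ] A) A) isDerivation_inr
  have hy' (a : A) : Tendsto (fun n => (defect (y n).1 (y n).2 (-(tpi A (y n).1 + (y n).2)) a,
      a * (y n).2)) atTop (𝓝 (0, a)) := by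
    simpa only [← kernelBimod_sub, Prod.mk.eta, ContinuousLinearMap.inr_apply] using hy a
  exact ⟨fun n => (y n).1, fun n => (y n).2, fun n => -(tpi A (y n).1 + (y n).2),
    fun n => add_neg_cancel _, fun a => ((continuous_fst.tendsto _).comp (hy' a)),
    fun a => ((continuous_snd.tendsto _).comp (hy' a))⟩

end KernelBimodule

theorem le_of_not_bddAbove_of_mul_le {ι : Type*} {x : ι → ℝ} {b c B : ℝ}
    (hx : ¬BddAbove (Set.range x)) (h : ∀ i, x i * c ≤ x i * b + B) : c ≤ b := by
  by_contra! hbc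
  refine hx ⟨B / (c - b), ?_⟩
  rintro _ ⟨i, rfl⟩
  rw [le_div_iff₀ (sub_pos.2 hbc)]
  linarith [h i]

namespace IsUnitizationApproxDiagonal

variable {A : Type} [NonUnitalNormedRing A] [NormedSpace ℂ A]
  [IsScalarTower ℂ A A] [SMulCommClass ℂ A A]
  {m : ℕ → A ⊗[ℂ] A} {F G : ℕ → A}

theorem tendsto_tactL_sub_tactR (h : IsUnitizationApproxDiagonal m F G) (n k : ℕ) :
    Tendsto (fun j => tactL A (G j) (tactR A (F k) (m n)) - tactR A (G j * F k) (m n)) atTop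
      (𝓝 0) := by
  have hR : Tendsto (fun j => tactR A (G j * F k) (m n)) atTop (𝓝 (tactR A (F k) (m n))) :=
    (((rightAct A).flip (m n)).continuous.tendsto (F k)).comp (h.tendsto_mul' (F k))
  simpa using (tendsto_tactL h.tendsto_mul' (tactR A (F k) (m n))).sub hR

theorem exists_norm_tmul_sub_tmul_le [CompleteSpace A] (h : IsUnitizationApproxDiagonal m F G) :
    ∃ K, 0 ≤ K ∧ ∀ n k, ∃ ε : ℕ → ℝ, Tendsto ε atTop (𝓝 0) ∧
      ∀ j, ‖G j ⊗ₜ[ℂ] (G n * F k) - F n ⊗ₜ[ℂ] (G j * F k)‖ ≤ ‖G j‖ * K + ε j := by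
  obtain ⟨K, hK⟩ := exists_norm_le_of_tendsto h.tendsto_defect
  obtain ⟨C, hC, hFC⟩ := exists_norm_mul_le_of_tendsto (𝕜 := ℂ) h.tendsto_mul
  refine ⟨C * K, mul_nonneg hC ((norm_nonneg _).trans (hK 0)), fun n k =>
    ⟨_, tendsto_zero_iff_norm_tendsto_zero.1 (h.tendsto_tactL_sub_tactR n k), fun j => ?_⟩⟩
  have hR : ‖tactR A (F k) (defect (m n) (F n) (G n) (G j))‖ ≤ ‖G j‖ * (C * K) :=
    calc _ ≤ C * ‖defect (m n) (F n) (G n) (G j)‖ := norm_tactR_le hC (hFC · k) _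
      _ ≤ C * (K * ‖G j‖) := by
          gcongr
          exact ContinuousLinearMap.le_of_opNorm_le _ (hK n) _
      _ = ‖G j‖ * (C * K) := by ring
  rw [eq_sub_of_add_eq' (tactR_defect (F k) (m n) (F n) (G n) (G j)).symm]
  exact (norm_sub_le _ _).trans (by gcongr)

theorem bddAbove_range_norm_right [CompleteSpace A] (h : IsUnitizationApproxDiagonal m F G) :
    BddAbove (Set.range fun n => ‖G n‖) := by
  obtain ⟨K, -, hK⟩ := h.exists_norm_tmul_sub_tmul_le
  by_contra hG
  have hGF (n k : ℕ) : ‖G n * F k‖ ≤ K := by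
    obtain ⟨ε, hε, hle⟩ := hK n k
    obtain ⟨B, hB⟩ := (hε.add ((h.tendsto_mul' (F k)).norm.const_mul ‖F n‖)).bddAbove_range
    refine le_of_not_bddAbove_of_mul_le hG (B := B) fun j => ?_
    have hj := (norm_sub_norm_le _ _).trans (hle j)
    rw [ProjectiveTensor.norm_tmul, ProjectiveTensor.norm_tmul] at hj
    have hBj : ε j + ‖F n‖ * ‖G j * F k‖ ≤ B := hB ⟨j, rfl⟩
    linarith
  refine hG ⟨K, ?_⟩
  rintro _ ⟨n, rfl⟩
  exact le_of_tendsto' (h.tendsto_mul (G n)).norm (hGF n)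

theorem bddAbove_range_norm_left [CompleteSpace A] (h : IsUnitizationApproxDiagonal m F G) :
    BddAbove (Set.range fun n => ‖F n‖) := by
  obtain ⟨K, hK0, hK⟩ := h.exists_norm_tmul_sub_tmul_le
  obtain ⟨C, hC, hFC⟩ := exists_norm_mul_le_of_tendsto (𝕜 := ℂ) h.tendsto_mul
  obtain ⟨B, hB⟩ := h.bddAbove_range_norm_right
  replace hB (n : ℕ) : ‖G n‖ ≤ B := hB ⟨n, rfl⟩
  have hB0 : 0 ≤ B := (norm_nonneg _).trans (hB 0)
  refine ⟨√(B * K + B * (C * B)), ?_⟩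
  rintro _ ⟨n, rfl⟩
  obtain ⟨ε, hε, hle⟩ := hK n n
  refine Real.le_sqrt_of_sq_le ?_
  have hlim : Tendsto (fun j => ‖F n‖ * ‖G j * F n‖ - ε j) atTop (𝓝 (‖F n‖ ^ 2)) := by
    simpa [sq] using ((h.tendsto_mul' (F n)).norm.const_mul ‖F n‖).sub hε
  refine le_of_tendsto' hlim fun j => ?_
  have hj := (norm_sub_norm_le _ _).trans ((norm_sub_rev _ _).trans_le (hle j))
  rw [ProjectiveTensor.norm_tmul, ProjectiveTensor.norm_tmul] at hj
  have hGK : ‖G j‖ * K ≤ B * K := by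
    gcongr
    exact hB j
  have hGF : ‖G j‖ * ‖G n * F n‖ ≤ B * (C * B) := by
    gcongr
    exacts [hB j, (hFC _ _).trans (by gcongr; exact hB n)]
  linarith

theorem exists_bounded_approxIdentity [CompleteSpace A] (h : IsUnitizationApproxDiagonal m F G) :
    ∃ (e : ℕ → A) (C : ℝ), (∀ n, ‖e n‖ ≤ C) ∧ ∀ a,
      Tendsto (fun n => e n * a) atTop (𝓝 a) ∧ Tendsto (fun n => a * e n) atTop (𝓝 a) := by
  obtain ⟨C, hC⟩ := h.bddAbove_range_norm_left
  obtain ⟨B, hB⟩ := h.bddAbove_range_norm_right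
  replace hC (n : ℕ) : ‖F n‖ ≤ C := hC ⟨n, rfl⟩
  replace hB (n : ℕ) : ‖G n‖ ≤ B := hB ⟨n, rfl⟩
  refine ⟨fun n => F n + G n - F n * G n, C + B + C * B, fun n => ?_, fun a => ⟨?_, ?_⟩⟩
  · calc _ ≤ ‖F n‖ + ‖G n‖ + ‖F n‖ * ‖G n‖ :=
          (norm_sub_le _ _).trans (add_le_add (norm_add_le _ _) (norm_mul_le _ _))
      _ ≤ C + B + C * B := by
          have := (norm_nonneg _).trans (hC n)
          gcongr
          exacts [hC n, hB n, hC n, hB n]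
  · exact tendsto_add_sub_mul_mul (isBoundedUnder_of ⟨C, hC⟩) (h.tendsto_mul' a)
  · exact tendsto_mul_add_sub_mul (h.tendsto_mul a) (isBoundedUnder_of ⟨B, hB⟩)

end IsUnitizationApproxDiagonal

section Compress

variable {A : Type} [NonUnitalNormedRing A] [NormedSpace ℂ A]
  [IsScalarTower ℂ A A] [SMulCommClass ℂ A A]

/-- The image of the tensor `w = 1 ⊗ 1 - f ⊗ 1 - 1 ⊗ g - m` under `x ⊗ y ↦ x e ⊗ e y`. It lies in
`A ⊗ A`, although `w` lives over the unitization of `A`. -/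
def compress (e : A) (m : A ⊗[ℂ] A) (f g : A) : A ⊗[ℂ] A :=
  e ⊗ₜ e - (f * e) ⊗ₜ e - e ⊗ₜ (e * g) - innerSandwich e m

theorem tactL_compress_sub_tactR_compress (e : A) (m : A ⊗[ℂ] A) (f g a : A) :
    tactL A a (compress e m f g) - tactR A a (compress e m f g) =
      e ⊗ₜ (e * (g * a - a)) - ((a * f - a) * e) ⊗ₜ e - innerSandwich e (defect m f g a) := by
  simp only [compress, defect_apply, map_sub, map_add, tactL_tmul, tactR_tmul, innerSandwich_tmul,
    innerSandwich_tactL, innerSandwich_tactR, mul_sub, sub_mul, TensorProduct.tmul_sub,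
    TensorProduct.sub_tmul, mul_assoc]
  abel

theorem tpi_compress (e : A) (m : A ⊗[ℂ] A) (f g : A) :
    tpi A (compress e m f g) =
      e * e - f * (e * e) - e * (e * g) - tpi A (innerSandwich e m) := by
  simp only [compress, map_sub, tpi_tmul, mul_assoc]

theorem tendsto_tpi_compress_sub {ι : Type*} {l : Filter ι} {e : ι → A}
    (he : IsBoundedUnder (· ≤ ·) l (norm ∘ e)) (hl : ∀ a, Tendsto (fun i => e i * a) l (𝓝 a))
    (hr : ∀ a, Tendsto (fun i => a * e i) l (𝓝 a)) {m : A ⊗[ℂ] A} {f g : A}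
    (h : tpi A m + f + g = 0) :
    Tendsto (fun i => tpi A (compress (e i) m f g) - e i * e i) l (𝓝 0) := by
  have hf : Tendsto (fun i => f * (e i * e i)) l (𝓝 f) := by
    simpa only [mul_assoc] using tendsto_mul_mul_of_isBoundedUnder' he (hr f)
  have hg : Tendsto (fun i => e i * (e i * g)) l (𝓝 g) :=
    tendsto_mul_mul_of_isBoundedUnder he (hl g)
  rw [← neg_zero, ← h]
  refine (((tendsto_tpi_innerSandwich he hl m).add hf).add hg).neg.congr fun i => ?_
  rw [tpi_compress]
  abel

theorem IsUnitizationApproxDiagonal.exists_isSeqApproxDiagonal {m : ℕ → A ⊗[ℂ] A} {F G : ℕ → A}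
    (h : IsUnitizationApproxDiagonal m F G) {e : ℕ → A} {C : ℝ} (he : ∀ n, ‖e n‖ ≤ C)
    (hl : ∀ a, Tendsto (fun n => e n * a) atTop (𝓝 a))
    (hr : ∀ a, Tendsto (fun n => a * e n) atTop (𝓝 a)) :
    ∃ u : ℕ → A ⊗[ℂ] A, IsSeqApproxDiagonal u := by
  obtain ⟨φ, hφ, hπ⟩ := exists_strictMono_tendsto_diagonal_zero fun n =>
    tendsto_tpi_compress_sub (isBoundedUnder_of ⟨C, he⟩) hl hr (h.tpi_add_add n)
  have heφ : IsBoundedUnder (· ≤ ·) atTop (norm ∘ e ∘ φ) := isBoundedUnder_of ⟨C, fun n => he (φ n)⟩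
  refine ⟨fun n => compress (e (φ n)) (m n) (F n) (G n), fun a => ?_, fun a => ?_⟩
  · have hG : Tendsto (fun n => e (φ n) ⊗ₜ[ℂ] (e (φ n) * (G n * a - a))) atTop (𝓝 0) :=
      tendsto_bilin_zero_of_isBoundedUnder_left ProjectiveTensor.tmulCLM heφ
        (isBoundedUnder_le_mul_tendsto_zero heφ (tendsto_sub_nhds_zero_iff.2 (h.tendsto_mul' a)))
    have hF : Tendsto (fun n => ((a * F n - a) * e (φ n)) ⊗ₜ[ℂ] e (φ n)) atTop (𝓝 0) :=
      tendsto_bilin_zero_of_isBoundedUnder_right ProjectiveTensor.tmulCLM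
        ((tendsto_sub_nhds_zero_iff.2 (h.tendsto_mul a)).zero_mul_isBoundedUnder_le heφ) heφ
    have hm : Tendsto (fun n => innerSandwich (e (φ n)) (defect (m n) (F n) (G n) a)) atTop
        (𝓝 0) := by
      have hlim : Tendsto (fun n => C * C * ‖defect (m n) (F n) (G n) a‖) atTop (𝓝 0) := by
        simpa only [norm_zero, mul_zero] using (h.tendsto_defect a).norm.const_mul (C * C)
      refine squeeze_zero_norm (fun n => (norm_innerSandwich_le _ _).trans ?_) hlim
      have := (norm_nonneg _).trans (he (φ n))
      gcongr <;> exact he (φ n)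
    simpa [tactL_compress_sub_tactR_compress] using (hG.sub hF).sub hm
  · have hea := tendsto_mul_mul_of_isBoundedUnder heφ ((hl a).comp hφ.tendsto_atTop)
    have h0 := (hπ.mul_const a).add hea
    simpa [sub_mul, mul_assoc] using h0

end Compress

section Backward

variable {A : Type} [NonUnitalNormedRing A] [NormedSpace ℂ A] {X : Type} [NormedAddCommGroup X]
  [NormedSpace ℂ X]

namespace BanachBimod

theorem l_r_comm_apply (M : BanachBimod A X) (a b : A) (x : X) :
    M.l a (M.r b x) = M.r b (M.l a x) :=
  DFunLike.congr_fun (M.lr_comm a b) x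

/-- The map `b ⊗ c ↦ b·D c` from `A ⊗ A` to a Banach `A`-bimodule. -/
noncomputable def tensorCLM (M : BanachBimod A X) (D : A →L[ℂ] X) : A ⊗[ℂ] A →L[ℂ] X :=
  ProjectiveTensor.liftCLM (M.lCLM.bilinearComp (.id ℂ A) D)

@[simp]
theorem tensorCLM_tmul (M : BanachBimod A X) (D : A →L[ℂ] X) (b c : A) :
    M.tensorCLM D (b ⊗ₜ[ℂ] c) = M.l b (D c) := by
  simp [tensorCLM]

variable [IsScalarTower ℂ A A] [SMulCommClass ℂ A A] {M : BanachBimod A X} {D : A →L[ℂ] X}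

theorem IsDerivation.tensorCLM_tactL_sub_tactR (hD : M.IsDerivation D) (a : A) (t : A ⊗[ℂ] A) :
    M.tensorCLM D (tactL A a t - tactR A a t) =
      M.l a (M.tensorCLM D t) - M.r a (M.tensorCLM D t) - M.l (tpi A t) (D a) := by
  induction t with
  | zero => simp only [map_zero, ← lCLM_apply, zero_apply, sub_zero]
  | tmul b c =>
    simp only [tactL_tmul, tactR_tmul, tpi_tmul, tensorCLM_tmul, map_sub, map_add, hD c a, M.l_mul,
      M.l_r_comm_apply, ContinuousLinearMap.comp_apply]
    abel
  | add s t hs ht =>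
    simp only [map_add, map_sub, M.l_add, add_apply] at hs ht ⊢
    rw [add_sub_add_comm, hs, ht]
    abel

/-- The element `Φ t - D p + π t·D p`, where `Φ` is `M.tensorCLM D`. The inner derivation of `Φ t`
alone approximates `a ↦ π t·D a`, which need not be close to `D` if `M` is not essential; the
other two terms compensate for the difference. -/
noncomputable def approxPrimitive (M : BanachBimod A X) (D : A →L[ℂ] X) (t : A ⊗[ℂ] A) (p : A) :
    X :=
  M.tensorCLM D t - D p + M.l (tpi A t) (D p)

theorem IsDerivation.l_sub_r_approxPrimitive (hD : M.IsDerivation D) (t : A ⊗[ℂ] A) (a p : A) :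
    M.l a (M.approxPrimitive D t p) - M.r a (M.approxPrimitive D t p) =
      M.tensorCLM D (tactL A a t - tactR A a t) + M.l (a * tpi A t - a) (D p) + D (p * a) -
        M.l (tpi A t) (D (p * a - a)) + M.l (tpi A t * p - p) (D a) := by
  simp only [approxPrimitive, hD.tensorCLM_tactL_sub_tactR, ← lCLM_apply, map_sub, map_add,
    sub_apply, hD p a]
  simp only [lCLM_apply, M.l_mul, l_r_comm_apply, ContinuousLinearMap.comp_apply]
  abel

end BanachBimod

theorem IsSeqApproxDiagonal.seqApproximatelyContractible [IsScalarTower ℂ A A]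
    [SMulCommClass ℂ A A] {u : ℕ → A ⊗[ℂ] A} (hu : IsSeqApproxDiagonal u) {C : ℝ}
    (hC : ∀ n, ‖tpi A (u n)‖ ≤ C) : SeqApproximatelyContractible A := by
  intro X _ _ M D hD
  obtain ⟨φ, hφ, hφp⟩ := exists_strictMono_tendsto_diagonal_zero
    (f := fun n k => tpi A (u k) * tpi A (u n) - tpi A (u n))
    fun n => tendsto_sub_nhds_zero_iff.2 (hu.tendsto_tpi_mul (tpi A (u n)))
  have hp : IsBoundedUnder (· ≤ ·) atTop (norm ∘ fun n => tpi A (u n)) := isBoundedUnder_of ⟨C, hC⟩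
  have hq : IsBoundedUnder (· ≤ ·) atTop (norm ∘ fun n => tpi A (u (φ n))) :=
    isBoundedUnder_of ⟨C, fun n => hC (φ n)⟩
  refine ⟨fun n => M.approxPrimitive D (u (φ n)) (tpi A (u n)), fun a => ?_⟩
  have hmain : Tendsto (fun n => D (tpi A (u n) * a)) atTop (𝓝 (D a)) :=
    (D.continuous.tendsto a).comp (hu.tendsto_tpi_mul a)
  have hcomm : Tendsto (fun n => M.tensorCLM D (tactL A a (u (φ n)) - tactR A a (u (φ n))))
      atTop (𝓝 0) := by
    rw [← map_zero (M.tensorCLM D)]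
    exact ((M.tensorCLM D).continuous.tendsto 0).comp
      ((hu.tendsto_comm a).comp hφ.tendsto_atTop)
  have hright : Tendsto (fun n => M.l (a * tpi A (u (φ n)) - a) (D (tpi A (u n)))) atTop (𝓝 0) :=
    tendsto_bilin_zero_of_isBoundedUnder_right (M.lCLM.bilinearComp (.id ℂ A) D)
      ((tendsto_sub_nhds_zero_iff.2 (hu.tendsto_mul_tpi a)).comp hφ.tendsto_atTop) hp
  have hleft : Tendsto (fun n => M.l (tpi A (u (φ n))) (D (tpi A (u n) * a - a))) atTop (𝓝 0) :=
    tendsto_bilin_zero_of_isBoundedUnder_left (M.lCLM.bilinearComp (.id ℂ A) D) hq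
      (tendsto_sub_nhds_zero_iff.2 (hu.tendsto_tpi_mul a))
  have hdiag : Tendsto (fun n => M.l (tpi A (u (φ n)) * tpi A (u n) - tpi A (u n)) (D a)) atTop
      (𝓝 0) := by
    rw [← map_zero (M.lCLM.flip (D a))]
    exact ((M.lCLM.flip (D a)).continuous.tendsto 0).comp hφp
  simpa only [hD.l_sub_r_approxPrimitive, zero_add, sub_zero, add_zero] using
    (((hcomm.add hright).add hmain).sub hleft).add hdiag

theorem IsSeqApproxDiagonal.exists_norm_tpi_le [IsScalarTower ℂ A A] [SMulCommClass ℂ A A]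
    [CompleteSpace A] {u : ℕ → A ⊗[ℂ] A} (hu : IsSeqApproxDiagonal u) {ι : Type*} {l : Filter ι}
    [l.NeBot] {e : ι → A} {C : ℝ} (he : ∀ i, ‖e i‖ ≤ C)
    (hl : ∀ a, Tendsto (fun i => e i * a) l (𝓝 a)) : ∃ K, ∀ n, ‖tpi A (u n)‖ ≤ K := by
  obtain ⟨K, hK, hle⟩ := exists_norm_mul_le_of_tendsto (𝕜 := ℂ) hu.tendsto_mul_tpi
  refine ⟨K * C, fun n => le_of_tendsto (hl (tpi A (u n))).norm (.of_forall fun i => ?_)⟩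
  exact (hle (e i) n).trans (mul_le_mul_of_nonneg_left (he i) hK)

end Backward

/-- A Banach algebra `A` is sequentially approximately contractible if and only
if `A` is sequentially pseudo-amenable and has a bounded approximate identity. -/
theorem seqApproxContractible_iff_seqPseudoAmenable_and_bai
    (A : Type) [NonUnitalNormedRing A] [NormedSpace ℂ A]
    [IsScalarTower ℂ A A] [SMulCommClass ℂ A A] [CompleteSpace A] :
    SeqApproximatelyContractible A ↔ SeqPseudoAmenable A ∧ HasBoundedApproxIdentity A := by
  rw [seqPseudoAmenable_iff]
  constructor
  · intro h
    obtain ⟨m, F, G, hw⟩ := h.exists_isUnitizationApproxDiagonal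
    obtain ⟨e, C, he, hid⟩ := hw.exists_bounded_approxIdentity
    exact ⟨hw.exists_isSeqApproxDiagonal he (fun a => (hid a).1) fun a => (hid a).2,
      ℕ, atTop, e, inferInstance, ⟨C, he⟩, hid⟩
  · rintro ⟨⟨u, hu⟩, ι, l, e, _, ⟨C, he⟩, hid⟩
    obtain ⟨K, hK⟩ := hu.exists_norm_tpi_le he fun a => (hid a).1
    exact hu.seqApproximatelyContractible hK
end
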